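/- Let n ≥ 2 and let X be an n×n real lower Hessenberg matrix whose leading principal minors τ₁(X), …, τ_n(X) are all positive, so X admits an LU factorization X = L·R with L ∈ N₋ and R ∈ 𝓑^{>0}. Assume L = T₁(u)·T₂(u)⋯T_{n−1}(u) for a triangular array u = (u_i^j)_{1≤i≤j≤n−1} of positive reals. Define X⁺ := R·L. Then all leading principal minors of X⁺ are positive, so X⁺ admits an LU factorization X⁺ = L⁺·R⁺, and L⁺ = T₁(u⁺)·T₂(u⁺)⋯T_{n−1}(u⁺) for a unique triangular array u⁺ of positive reals, given explicitly by u⁺_j^{i+j−1} = u_j^{i+j−1} · (τ_{j+1}^{i−1} · τ_{j−1}^{i}) / (τ_j^{i−1} · τ_j^{i}) for 1 ≤ i ≤ n−1 and 1 ≤ j ≤ n−i, where τ_j^{i} := τ_j( R·T₁(u)·T₂(u)⋯T_i(u) ). -/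

import Mathlib

/-! The key is an exchange relation. If `B` is upper bidiagonal with ones on the superdiagonal and
positive diagonal `d`, then for `a > 0` one has `B·ℓ_k(a) = ℓ_k(b)·B'` with `B'` of the same kind
and `b > 0` (`bidiag_mul_elemL`). Passing `B` through a whole factor `ℓ₁(a₁)⋯ℓ_m(a_m)` replaces
each `a_j` by `a_j·d_{j+1}/d'_j`, where `d'` is the final diagonal (`bidiag_mul_lprod`), because
before step `j` the entry `d_{j+1}` is still the original one, and after it `d_j` is final.

Starting with `R` and passing through `T₁(u), …, T_{n-1}(u)` gives positive diagonals `D i` with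
`R·T₁(u)⋯T_i(u) = T₁(v)⋯T_i(v)·bidiag (D i)`. Since the left factor on the right-hand side is lower
unipotent, `τ_j^i` is the product of the first `j` entries of `D i` (`leadMinor_lowUni_mul`), so
all minors are positive, the diagonal entries are quotients of consecutive τ's, and `v` is the array
given by the explicit formula.

For uniqueness, LU factorizations are unique (`lu_unique`), and `L(u)` determines a positive array
`u` (`Lmat_inj`): each `T_i(u)` is lower bidiagonal, while `T_{i+1}(u)⋯T_{n-1}(u)` has identity rows
at the bottom, so `T_i(u)` can be peeled off row by row from the bottom (`lprod_mul_inj`). -/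

open Matrix

/-- A lower Hessenberg matrix: superdiagonal entries are `1`, entries above the
superdiagonal vanish. -/
def IsLowerHessenberg {n : ℕ} (M : Matrix (Fin n) (Fin n) ℝ) : Prop :=
  (∀ i j : Fin n, (j : ℕ) = (i : ℕ) + 1 → M i j = 1) ∧
  (∀ i j : Fin n, (i : ℕ) + 1 < (j : ℕ) → M i j = 0)

/-- Invertible upper triangular matrices (members of `B₊`). -/
def IsUpperTriReg {n : ℕ} (M : Matrix (Fin n) (Fin n) ℝ) : Prop :=
  (∀ i j : Fin n, j < i → M i j = 0) ∧ IsUnit M.det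

/-- `ℓ_{k+1}(a)` (paper's 1-indexed `ℓ_i` with `i = k+1`): the identity matrix with
the entry `a` inserted in (0-indexed) position `(k+1, k)`. -/
def elemL (n : ℕ) (k : ℕ) (a : ℝ) : Matrix (Fin n) (Fin n) ℝ :=
  fun p q => (if p = q then 1 else 0) + (if (p : ℕ) = k + 1 ∧ (q : ℕ) = k then a else 0)

/-- `T_i(u) = ℓ₁(u_1^i)·ℓ₂(u_2^{i+1})⋯ℓ_{n−i}(u_{n−i}^{n−1})` for a triangular
array `u` (the value `u i j` is the paper's `u_i^j`). -/
def Tmat (n : ℕ) (u : ℕ → ℕ → ℝ) (i : ℕ) : Matrix (Fin n) (Fin n) ℝ :=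
  ((List.range (n - i)).map (fun j => elemL n j (u (j + 1) (i + j)))).prod

/-- `L(u) = T₁(u)·T₂(u)⋯T_{n−1}(u)`. -/
def Lmat (n : ℕ) (u : ℕ → ℕ → ℝ) : Matrix (Fin n) (Fin n) ℝ :=
  ((List.range (n - 1)).map (fun i => Tmat n u (i + 1))).prod

/-- The triangular array `u` vanishes outside the index range `1 ≤ i ≤ j ≤ n−1`. -/
def OnTriangle (n : ℕ) (u : ℕ → ℕ → ℝ) : Prop :=
  ∀ i j, ¬(1 ≤ i ∧ i ≤ j ∧ j ≤ n - 1) → u i j = 0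

/-- The triangular array `u` is positive on the index range `1 ≤ i ≤ j ≤ n−1`. -/
def PosTriangle (n : ℕ) (u : ℕ → ℕ → ℝ) : Prop :=
  ∀ i j, 1 ≤ i → i ≤ j → j ≤ n - 1 → 0 < u i j

/-- Upper bidiagonal matrices with ones on the superdiagonal (the set `𝓑`). -/
def IsUpperBidiagOne {n : ℕ} (M : Matrix (Fin n) (Fin n) ℝ) : Prop :=
  (∀ p q : Fin n, (p : ℕ) + 1 = (q : ℕ) → M p q = 1) ∧
  (∀ p q : Fin n, (p : ℕ) ≠ (q : ℕ) → (p : ℕ) + 1 ≠ (q : ℕ) → M p q = 0)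

/-- Members of `𝓑^{>0}`. -/
def IsBpos {n : ℕ} (M : Matrix (Fin n) (Fin n) ℝ) : Prop :=
  IsUpperBidiagOne M ∧ ∀ p : Fin n, 0 < M p p

/-- The `k`-th leading principal minor of `M` (`= 1` for `k = 0`; junk value `0` for `k > n`). -/
noncomputable def leadMinor {n : ℕ} (M : Matrix (Fin n) (Fin n) ℝ) (k : ℕ) : ℝ :=
  if h : k ≤ n then (M.submatrix (Fin.castLE h) (Fin.castLE h)).det else 0

/-- `τ_j^i = τ_j(R·T₁(u)·T₂(u)⋯T_i(u))`. -/
noncomputable def tauFun (n : ℕ) (u : ℕ → ℕ → ℝ) (R : Matrix (Fin n) (Fin n) ℝ)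
    (i j : ℕ) : ℝ :=
  leadMinor (R * ((List.range i).map (fun m => Tmat n u (m + 1))).prod) j

/-- The explicit update of the Lusztig parameters: for a triangle index `(j, m)` with
`m = i+j−1` (so `i = m−j+1`),
`u⁺_j^{i+j−1} = u_j^{i+j−1}·(τ_{j+1}^{i−1}·τ_{j−1}^{i})/(τ_j^{i−1}·τ_j^{i})`. -/
noncomputable def uplusFormula (n : ℕ) (u : ℕ → ℕ → ℝ)
    (R : Matrix (Fin n) (Fin n) ℝ) (j m : ℕ) : ℝ :=
  if 1 ≤ j ∧ j ≤ m ∧ m ≤ n - 1 then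
    u j m * (tauFun n u R (m - j) (j + 1) * tauFun n u R (m - j + 1) (j - 1)) /
      (tauFun n u R (m - j) j * tauFun n u R (m - j + 1) j)
  else 0

/-! ### Elementary lower matrices -/

lemma mul_elemL_apply {n k : ℕ} (hk : k + 1 < n) (M : Matrix (Fin n) (Fin n) ℝ) (a : ℝ)
    (p q : Fin n) :
    (M * elemL n k a) p q = M p q + if (q : ℕ) = k then M p ⟨k + 1, hk⟩ * a else 0 := by
  simp only [Matrix.mul_apply, elemL, mul_add, Finset.sum_add_distrib]
  congr 1
  · simp
  · rw [Finset.sum_eq_single (⟨k + 1, hk⟩ : Fin n)]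
    · simp
    · intro b _ hb
      have : (b : ℕ) ≠ k + 1 := fun h => hb (Fin.ext h)
      simp [this]
    · simp

lemma elemL_mul_apply {n k : ℕ} (hk : k + 1 < n) (M : Matrix (Fin n) (Fin n) ℝ) (a : ℝ)
    (p q : Fin n) :
    (elemL n k a * M) p q =
      M p q + if (p : ℕ) = k + 1 then a * M ⟨k, by omega⟩ q else 0 := by
  simp only [Matrix.mul_apply, elemL, add_mul, Finset.sum_add_distrib]
  congr 1
  · simp
  · rw [Finset.sum_eq_single (⟨k, by omega⟩ : Fin n)]
    · simp
    · intro b _ hb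
      have : (b : ℕ) ≠ k := fun h => hb (Fin.ext h)
      simp [this]
    · simp

/-- The product `ℓ₁(a 0)·ℓ₂(a 1)⋯ℓ_m(a (m-1))`. -/
def lprod (n m : ℕ) (a : ℕ → ℝ) : Matrix (Fin n) (Fin n) ℝ :=
  ((List.range m).map (fun j => elemL n j (a j))).prod

lemma lprod_succ (n m : ℕ) (a : ℕ → ℝ) :
    lprod n (m + 1) a = lprod n m a * elemL n m (a m) := by
  simp [lprod, List.range_succ]

lemma lprod_congr {n m : ℕ} {a b : ℕ → ℝ} (h : ∀ j < m, a j = b j) :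
    lprod n m a = lprod n m b := by
  unfold lprod
  congr 1
  apply List.map_congr_left
  intro j hj
  rw [h j (List.mem_range.1 hj)]

lemma Tmat_eq_lprod (n : ℕ) (u : ℕ → ℕ → ℝ) (i : ℕ) :
    Tmat n u i = lprod n (n - i) (fun j => u (j + 1) (i + j)) := rfl

/-- Left multiplication by `ℓ₁(a 0)⋯ℓ_m(a (m-1))` leaves the rows of index `> m` alone. -/
lemma lprod_mul_row_ge {n m : ℕ} (hm : m < n) (a : ℕ → ℝ) (M : Matrix (Fin n) (Fin n) ℝ)
    (p q : Fin n) (hp : m < p) : (lprod n m a * M) p q = M p q := by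
  induction m generalizing M with
  | zero => simp [lprod]
  | succ m ih =>
    rw [lprod_succ, Matrix.mul_assoc, ih (by omega) _ (by omega), elemL_mul_apply hm,
      if_neg (by omega), add_zero]

/-- The product `ℓ₁(a 0)⋯ℓ_m(a (m-1))` is lower bidiagonal: left multiplication by it adds
`a j` times row `j` to row `j + 1`, simultaneously for all `j < m`. -/
lemma lprod_mul_row {n m : ℕ} (hm : m < n) (a : ℕ → ℝ) (M : Matrix (Fin n) (Fin n) ℝ)
    (j : ℕ) (hj : j < m) (q : Fin n) :
    (lprod n m a * M) ⟨j + 1, by omega⟩ q =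
      M ⟨j + 1, by omega⟩ q + a j * M ⟨j, by omega⟩ q := by
  induction m generalizing M with
  | zero => omega
  | succ m ih =>
    rw [lprod_succ, Matrix.mul_assoc]
    rcases Nat.lt_succ_iff_lt_or_eq.1 hj with h | h
    · rw [ih (by omega) _ h, elemL_mul_apply hm, elemL_mul_apply hm, if_neg (by simp; omega),
        if_neg (by simp; omega), add_zero, add_zero]
    · subst h
      rw [lprod_mul_row_ge (by omega) _ _ _ _ (by simp), elemL_mul_apply hm, if_pos rfl]

/-! ### Lower unipotent matrices -/

/-- Lower unipotent matrices (members of `N₋`). -/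
def IsLowUni {n : ℕ} (M : Matrix (Fin n) (Fin n) ℝ) : Prop :=
  (∀ p q : Fin n, p < q → M p q = 0) ∧ ∀ p : Fin n, M p p = 1

lemma isLowUni_one {n : ℕ} : IsLowUni (1 : Matrix (Fin n) (Fin n) ℝ) :=
  ⟨fun _ _ h => Matrix.one_apply_ne h.ne, fun _ => Matrix.one_apply_eq _⟩

lemma IsLowUni.mul {n : ℕ} {A B : Matrix (Fin n) (Fin n) ℝ} (hA : IsLowUni A)
    (hB : IsLowUni B) : IsLowUni (A * B) := by
  constructor
  · intro p q h
    rw [Matrix.mul_apply]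
    refine Finset.sum_eq_zero fun r _ => ?_
    rcases lt_or_ge p r with h1 | h1
    · rw [hA.1 _ _ h1, zero_mul]
    · rw [hB.1 _ _ (h1.trans_lt h), mul_zero]
  · intro p
    rw [Matrix.mul_apply, Finset.sum_eq_single p]
    · rw [hA.2, hB.2, one_mul]
    · intro r _ hr
      rcases lt_or_gt_of_ne hr with h1 | h1
      · rw [hB.1 _ _ h1, mul_zero]
      · rw [hA.1 _ _ h1, zero_mul]
    · simp

lemma isLowUni_list_prod {n : ℕ} (l : List (Matrix (Fin n) (Fin n) ℝ))
    (h : ∀ M ∈ l, IsLowUni M) : IsLowUni l.prod := by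
  induction l with
  | nil => simpa using isLowUni_one
  | cons M l ih =>
    rw [List.prod_cons]
    exact (h M (by simp)).mul (ih fun N hN => h N (by simp [hN]))

lemma isLowUni_elemL (n k : ℕ) (a : ℝ) : IsLowUni (elemL n k a) := by
  constructor
  · intro p q h
    have h' : (p : ℕ) < q := h
    simp only [elemL]
    rw [if_neg h.ne, if_neg (by omega), add_zero]
  · intro p
    simp only [elemL]
    rw [if_pos trivial, if_neg (by omega), add_zero]

lemma isLowUni_Tmat (n : ℕ) (u : ℕ → ℕ → ℝ) (i : ℕ) : IsLowUni (Tmat n u i) := by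
  refine isLowUni_list_prod _ fun M hM => ?_
  obtain ⟨j, -, rfl⟩ := List.mem_map.1 hM
  exact isLowUni_elemL _ _ _

lemma isLowUni_prod_Tmat (n : ℕ) (u : ℕ → ℕ → ℝ) (c k : ℕ) :
    IsLowUni ((List.range k).map (fun i => Tmat n u (i + c))).prod := by
  refine isLowUni_list_prod _ fun M hM => ?_
  obtain ⟨j, -, rfl⟩ := List.mem_map.1 hM
  exact isLowUni_Tmat _ _ _

/-- If `A = B * U` with `A`, `B` lower unipotent and `U` upper triangular, then `U = 1`. -/
lemma upper_eq_one {n : ℕ} {A B U : Matrix (Fin n) (Fin n) ℝ} (hA : IsLowUni A)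
    (hB : IsLowUni B) (hU : ∀ p q : Fin n, q < p → U p q = 0) (h : A = B * U) : U = 1 := by
  have key : ∀ k : ℕ, ∀ p : Fin n, (p : ℕ) = k → ∀ q, U p q = (1 : Matrix _ _ ℝ) p q := by
    intro k
    induction k using Nat.strong_induction_on with
    | _ k ih =>
      intro p hp q
      rcases lt_or_ge q p with hqp | hqp
      · rw [hU p q hqp, Matrix.one_apply_ne hqp.ne']
      · have h1 : A p q = U p q := by
          rw [h, Matrix.mul_apply, Finset.sum_eq_single p]
          · rw [hB.2, one_mul]
          · intro r _ hr
            rcases lt_or_gt_of_ne hr with h1 | h1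
            · rw [ih r (by rw [← hp]; exact h1) r rfl q,
                Matrix.one_apply_ne (h1.trans_le hqp).ne, mul_zero]
            · rw [hB.1 _ _ h1, zero_mul]
          · simp
        rw [← h1]
        rcases hqp.eq_or_lt with h2 | h2
        · subst h2
          rw [hA.2, Matrix.one_apply_eq]
        · rw [hA.1 _ _ h2, Matrix.one_apply_ne h2.ne]
  ext p q
  exact key p p rfl q

/-- Uniqueness of the lower factor in an LU factorization. -/
lemma lu_unique {n : ℕ} {A B R S : Matrix (Fin n) (Fin n) ℝ} (hA : IsLowUni A)
    (hB : IsLowUni B) (hR : IsUpperTriReg R) (hS : IsUpperTriReg S) (h : A * R = B * S) :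
    A = B := by
  have hRi : Matrix.BlockTriangular R⁻¹ id := by
    have := R.invertibleOfIsUnitDet hR.2
    exact Matrix.blockTriangular_inv_of_blockTriangular (b := id) fun i j hij => hR.1 i j hij
  have hSt : Matrix.BlockTriangular S id := fun i j hij => hS.1 i j hij
  have hAU : A = B * (S * R⁻¹) := by
    rw [← Matrix.mul_assoc, ← h, Matrix.mul_nonsing_inv_cancel_right _ _ hR.2]
  have hU := upper_eq_one (U := S * R⁻¹) hA hB (fun p q hpq => (hSt.mul hRi) hpq) hAU
  rw [hAU, hU, Matrix.mul_one]

/-! ### Injectivity of the Lusztig parametrization -/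

/-- One bidiagonal factor can be peeled off uniquely on the left: comparing the rows from the
bottom up, the diagonal entry of row `j` gives `a j`, and dividing by it gives row `j` of `M`. -/
lemma lprod_mul_inj {n m : ℕ} (hm : m < n) {a b : ℕ → ℝ} {M N : Matrix (Fin n) (Fin n) ℝ}
    (ha : ∀ j < m, a j ≠ 0) (hM : IsLowUni M) (hN : IsLowUni N)
    (hrow : ∀ p q : Fin n, m ≤ p → M p q = N p q)
    (h : lprod n m a * M = lprod n m b * N) : (∀ j < m, a j = b j) ∧ M = N := by
  have key : ∀ j (hj : j < m), (∀ q, M ⟨j + 1, by omega⟩ q = N ⟨j + 1, by omega⟩ q) →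
      a j = b j ∧ ∀ q, M ⟨j, by omega⟩ q = N ⟨j, by omega⟩ q := by
    intro j hj hq
    have h1 : ∀ q, a j * M ⟨j, by omega⟩ q = b j * N ⟨j, by omega⟩ q := by
      intro q
      have h2 := congrFun (congrFun h ⟨j + 1, by omega⟩) q
      rw [lprod_mul_row hm _ _ j hj, lprod_mul_row hm _ _ j hj, hq] at h2
      exact add_left_cancel h2
    have h3 : a j = b j := by
      have := h1 ⟨j, by omega⟩
      rwa [hM.2, hN.2, mul_one, mul_one] at this
    refine ⟨h3, fun q => ?_⟩
    have := h1 q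
    rw [← h3] at this
    exact mul_left_cancel₀ (ha j hj) this
  have rows : ∀ t ≤ m, ∀ p q : Fin n, m - t ≤ p → M p q = N p q := by
    intro t
    induction t with
    | zero => intro _ p q hp; exact hrow p q (by omega)
    | succ t ih =>
      intro ht p q hp
      by_cases hpt : m - t ≤ p
      · exact ih (by omega) p q hpt
      · exact (key p (by omega) fun q => ih (by omega) _ q (by simp; omega)).2 q
  refine ⟨fun j hj => (key j hj fun q => rows m le_rfl _ q (by simp)).1, ?_⟩
  ext p q
  exact rows m le_rfl p q (by simp)

/-- The partial product `T_{n-k}(u)⋯T_{n-1}(u)` of the last `k` factors of `L(u)`. -/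
def tailProd (n : ℕ) (u : ℕ → ℕ → ℝ) (k : ℕ) : Matrix (Fin n) (Fin n) ℝ :=
  ((List.range k).map (fun i => Tmat n u (i + (n - k)))).prod

lemma tailProd_succ {n k : ℕ} (hk : k + 1 < n) (u : ℕ → ℕ → ℝ) :
    tailProd n u (k + 1) = Tmat n u (n - (k + 1)) * tailProd n u k := by
  unfold tailProd
  rw [List.range_succ_eq_map, List.map_cons, List.prod_cons, List.map_map]
  congr 2
  · simp
  · refine List.map_congr_left fun i _ => ?_
    simp only [Function.comp]
    congr 1
    omega

lemma tailProd_row {n k : ℕ} (hk : k < n) (u : ℕ → ℕ → ℝ) (p q : Fin n) (hp : k < p) :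
    tailProd n u k p q = (1 : Matrix (Fin n) (Fin n) ℝ) p q := by
  induction k with
  | zero => simp [tailProd]
  | succ k ih =>
    rw [tailProd_succ hk, Tmat_eq_lprod, lprod_mul_row_ge (by omega) _ _ _ _ (by omega)]
    exact ih (by omega) (by omega)

lemma tailProd_inj {n : ℕ} {u v : ℕ → ℕ → ℝ} (hu : PosTriangle n u) (k : ℕ) (hk : k < n)
    (h : tailProd n u k = tailProd n v k) :
    ∀ i, n - k ≤ i → i < n → ∀ j < n - i, u (j + 1) (i + j) = v (j + 1) (i + j) := by
  induction k with
  | zero => intro i h1 h2; omega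
  | succ k ih =>
    rw [tailProd_succ hk, tailProd_succ hk, Tmat_eq_lprod, Tmat_eq_lprod] at h
    obtain ⟨h1, h2⟩ := lprod_mul_inj (by omega)
      (fun j hj => (hu (j + 1) (n - (k + 1) + j) (by omega) (by omega) (by omega)).ne')
      (isLowUni_prod_Tmat n u _ k) (isLowUni_prod_Tmat n v _ k)
      (fun p q hp => by
        have hp' : k < (p : ℕ) := by omega
        exact (tailProd_row (by omega) u p q hp').trans
          (tailProd_row (by omega) v p q hp').symm) h
    intro i hi hin j hj
    by_cases hik : i = n - (k + 1)
    · subst hik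
      exact h1 j hj
    · exact ih (by omega) h2 i (by omega) hin j hj

lemma Lmat_eq_tailProd {n : ℕ} (hn : 2 ≤ n) (u : ℕ → ℕ → ℝ) :
    Lmat n u = tailProd n u (n - 1) := by
  have : n - (n - 1) = 1 := by omega
  simp only [Lmat, tailProd, this]

/-- A positive triangular array is determined by `L(u)`. -/
lemma Lmat_inj {n : ℕ} (hn : 2 ≤ n) {u v : ℕ → ℕ → ℝ} (hu : PosTriangle n u)
    (huT : OnTriangle n u) (hvT : OnTriangle n v) (h : Lmat n u = Lmat n v) : u = v := by
  rw [Lmat_eq_tailProd hn, Lmat_eq_tailProd hn] at h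
  funext j m
  by_cases hjm : 1 ≤ j ∧ j ≤ m ∧ m ≤ n - 1
  · have := tailProd_inj hu (n - 1) (by omega) h (m - j + 1) (by omega) (by omega) (j - 1)
      (by omega)
    rwa [show j - 1 + 1 = j by omega, show m - j + 1 + (j - 1) = m by omega] at this
  · rw [huT j m hjm, hvT j m hjm]

/-! ### Moving a bidiagonal matrix through the factors -/

/-- The upper bidiagonal matrix with diagonal `d` and ones on the superdiagonal. -/
def bidiag (n : ℕ) (d : ℕ → ℝ) : Matrix (Fin n) (Fin n) ℝ :=
  fun p q => if (p : ℕ) = q then d p else if (p : ℕ) + 1 = q then 1 else 0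

lemma exists_bidiag {n : ℕ} {R : Matrix (Fin n) (Fin n) ℝ} (hR : IsBpos R) :
    ∃ d : ℕ → ℝ, (∀ p, 0 < d p) ∧ R = bidiag n d := by
  refine ⟨fun p => if h : p < n then R ⟨p, h⟩ ⟨p, h⟩ else 1, fun p => ?_, ?_⟩
  · dsimp only
    split_ifs with h
    · exact hR.2 _
    · exact one_pos
  · ext p q
    simp only [bidiag]
    split_ifs with h1 h2 h3
    · rw [← Fin.ext h1]
    · exact absurd p.2 h2
    · exact hR.1.1 p q h3
    · exact hR.1.2 p q h1 h3

/-- The basic exchange relation `B·ℓ(a) = ℓ(b)·B'`: only the `2 × 2` block in rows and columns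
`k`, `k + 1` is involved, and its determinant is preserved. -/
lemma bidiag_mul_elemL {n k : ℕ} (hk : k + 1 < n) (d : ℕ → ℝ) (a : ℝ) (h : d k + a ≠ 0) :
    bidiag n d * elemL n k a = elemL n k (a * d (k + 1) / (d k + a)) *
      bidiag n (Function.update (Function.update d k (d k + a)) (k + 1)
        (d k * d (k + 1) / (d k + a))) := by
  ext p q
  rw [mul_elemL_apply hk, elemL_mul_apply hk]
  simp only [bidiag, Function.update_apply]
  by_cases hp : (p : ℕ) = k + 1
  · by_cases hq : (q : ℕ) = k
    · simp [hp, hq]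
      field_simp
    · by_cases hq' : (q : ℕ) = k + 1
      · simp [hp, hq']
        field_simp
      · have h1 : ¬ k + 1 = (q : ℕ) := fun h => hq' h.symm
        have h2 : ¬ k = (q : ℕ) := fun h => hq h.symm
        simp [hp, hq, h1, h2]
  · by_cases hp' : (p : ℕ) = k
    · by_cases hq : (q : ℕ) = k
      · simp [hp', hq]
      · have h2 : ¬ k = (q : ℕ) := fun h => hq h.symm
        simp [hp', hq, h2]
    · by_cases hq : (q : ℕ) = k
      · simp [hp, hp', hq]
      · simp [hp, hp', hq]

/-- Moving `B = bidiag d` through `ℓ₁(a 0)⋯ℓ_m(a (m-1))`. The new parameter at `j` involves the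
old diagonal at `j + 1` and the new diagonal at `j`. -/
lemma bidiag_mul_lprod {n m : ℕ} (hm : m < n) (d a : ℕ → ℝ) (hd : ∀ p, 0 < d p)
    (ha : ∀ j < m, 0 < a j) :
    ∃ d' : ℕ → ℝ, (∀ p, 0 < d' p) ∧ (∀ p, m < p → d' p = d p) ∧
      bidiag n d * lprod n m a =
        lprod n m (fun j => a j * d (j + 1) / d' j) * bidiag n d' := by
  induction m with
  | zero => exact ⟨d, hd, fun _ _ => rfl, by simp [lprod]⟩
  | succ m ih =>
    obtain ⟨e, he, heq, hprod⟩ := ih (by omega) fun j hj => ha j (by omega)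
    have ham := ha m (by omega)
    have hpos : 0 < e m + a m := add_pos (he m) ham
    refine ⟨Function.update (Function.update e m (e m + a m)) (m + 1)
        (e m * e (m + 1) / (e m + a m)), ?_, ?_, ?_⟩
    · intro p
      simp only [Function.update_apply]
      split_ifs
      · exact div_pos (mul_pos (he _) (he _)) hpos
      · exact hpos
      · exact he p
    · intro p hp
      rw [Function.update_of_ne (by omega), Function.update_of_ne (by omega)]
      exact heq p (by omega)
    · rw [lprod_succ, ← Matrix.mul_assoc, hprod, Matrix.mul_assoc,
        bidiag_mul_elemL hm _ _ hpos.ne', ← Matrix.mul_assoc, lprod_succ]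
      congr 2
      · apply lprod_congr
        intro j hj
        rw [Function.update_of_ne (by omega), Function.update_of_ne (by omega)]
      · rw [Function.update_of_ne (by omega), Function.update_self, heq (m + 1) (by omega)]

/-- The diagonals `D i` of the bidiagonal factors obtained after passing `T₁(u), …, T_i(u)`. -/
lemma exists_diagonals {n : ℕ} {u : ℕ → ℕ → ℝ} (hu : PosTriangle n u) (d : ℕ → ℝ)
    (hd : ∀ p, 0 < d p) :
    ∃ D : ℕ → ℕ → ℝ, D 0 = d ∧ (∀ i ≤ n - 1, ∀ p, 0 < D i p) ∧
      ∀ i < n - 1, bidiag n (D i) * Tmat n u (i + 1) =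
        lprod n (n - (i + 1))
          (fun j => u (j + 1) (i + 1 + j) * D i (j + 1) / D (i + 1) j) *
          bidiag n (D (i + 1)) := by
  have step : ∀ (i : ℕ) (e : ℕ → ℝ), ∃ e' : ℕ → ℝ, i < n - 1 → (∀ p, 0 < e p) →
      (∀ p, 0 < e' p) ∧ bidiag n e * Tmat n u (i + 1) =
        lprod n (n - (i + 1)) (fun j => u (j + 1) (i + 1 + j) * e (j + 1) / e' j) *
          bidiag n e' := by
    intro i e
    by_cases hie : i < n - 1 ∧ ∀ p, 0 < e p
    · obtain ⟨e', h1, -, h3⟩ := bidiag_mul_lprod (n := n) (m := n - (i + 1)) (by omega) e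
        (fun j => u (j + 1) (i + 1 + j)) hie.2
        (fun j hj => hu _ _ (by omega) (by omega) (by omega))
      exact ⟨e', fun _ _ => ⟨h1, h3⟩⟩
    · exact ⟨e, fun h1 h2 => absurd ⟨h1, h2⟩ hie⟩
  choose f hf using step
  have hpos : ∀ i ≤ n - 1, ∀ p, 0 < (Nat.rec d f i : ℕ → ℝ) p := by
    intro i
    induction i with
    | zero => intro _; exact hd
    | succ i ih => intro hi; exact (hf i _ (by omega) (ih (by omega))).1
  exact ⟨fun i => Nat.rec d f i, rfl, hpos, fun i hi => (hf i _ hi (hpos i (by omega))).2⟩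

/-! ### Leading principal minors -/

/-- A lower triangular left factor makes the leading block of the product the product of the
leading blocks, and both of these are triangular. -/
lemma leadMinor_lowUni_mul {n : ℕ} {A : Matrix (Fin n) (Fin n) ℝ} (hA : IsLowUni A)
    (d : ℕ → ℝ) (k : ℕ) (hk : k ≤ n) :
    leadMinor (A * bidiag n d) k = ∏ q ∈ Finset.range k, d q := by
  have hsub : (A * bidiag n d).submatrix (Fin.castLE hk) (Fin.castLE hk) =
      A.submatrix (Fin.castLE hk) (Fin.castLE hk) *
        (bidiag n d).submatrix (Fin.castLE hk) (Fin.castLE hk) := by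
    ext p q
    simp only [Matrix.submatrix_apply, Matrix.mul_apply]
    symm
    refine Fintype.sum_of_injective (Fin.castLE hk) (Fin.castLE_injective hk) _ _ ?_ fun _ => rfl
    intro r hr
    have hkr : k ≤ (r : ℕ) := by
      by_contra hlt
      exact hr ⟨⟨r, by omega⟩, rfl⟩
    rw [hA.1 _ _ (by rw [Fin.lt_def]; simp; omega), zero_mul]
  rw [leadMinor, dif_pos hk, hsub, Matrix.det_mul, Matrix.det_of_isLowerTriangular,
    Matrix.det_of_isUpperTriangular]
  · simp [hA.2, bidiag, Finset.prod_range]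
  · intro p q hpq
    have : (q : ℕ) < p := hpq
    simp only [Matrix.submatrix_apply, bidiag, Fin.val_castLE]
    rw [if_neg (by omega), if_neg (by omega)]
  · intro p q hpq
    have : (p : ℕ) < q := hpq
    exact hA.1 _ _ (by rw [Fin.lt_def]; simpa using this)

lemma isUpperTriReg_bidiag {n : ℕ} {d : ℕ → ℝ} (hd : ∀ p, 0 < d p) :
    IsUpperTriReg (bidiag n d) := by
  have h : ∀ i j : Fin n, j < i → bidiag n d i j = 0 := by
    intro p q hpq
    have : (q : ℕ) < p := hpq
    simp only [bidiag]
    rw [if_neg (by omega), if_neg (by omega)]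
  refine ⟨h, ?_⟩
  rw [Matrix.det_of_isUpperTriangular fun p q hpq => h p q hpq, isUnit_iff_ne_zero]
  exact Finset.prod_ne_zero_iff.2 fun p _ => by simpa [bidiag] using ne_of_gt (hd p)

/-- well-posedness of one step of the discrete full Kostant–Toda map and
the explicit τ-function evolution of the Lusztig parameters. -/
theorem statement8 (n : ℕ) (hn : 2 ≤ n)
    (X : Matrix (Fin n) (Fin n) ℝ) (hX : IsLowerHessenberg X)
    (hτpos : ∀ k, 1 ≤ k → k ≤ n → 0 < leadMinor X k)
    (u : ℕ → ℕ → ℝ) (huT : OnTriangle n u) (huP : PosTriangle n u)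
    (R : Matrix (Fin n) (Fin n) ℝ) (hR : IsBpos R)
    (hfac : X = Lmat n u * R) :
    -- all leading principal minors of `X⁺ = R·L` are positive
    (∀ k, 1 ≤ k → k ≤ n → 0 < leadMinor (R * Lmat n u) k) ∧
    -- the updated parameters are positive
    PosTriangle n (uplusFormula n u R) ∧
    -- `X⁺` has an LU factorization with lower factor `L⁺ = T₁(u⁺)⋯T_{n−1}(u⁺)`
    (∃ Rp : Matrix (Fin n) (Fin n) ℝ, IsUpperTriReg Rp ∧
      R * Lmat n u = Lmat n (uplusFormula n u R) * Rp) ∧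
    -- and `u⁺` is the unique positive triangular array with this property
    (∀ u' : ℕ → ℕ → ℝ, OnTriangle n u' → PosTriangle n u' →
      (∃ Rp' : Matrix (Fin n) (Fin n) ℝ, IsUpperTriReg Rp' ∧
        R * Lmat n u = Lmat n u' * Rp') →
      u' = uplusFormula n u R) := by
  obtain ⟨d, hd, rfl⟩ := exists_bidiag hR
  obtain ⟨D, hD0, hDpos, hDstep⟩ := exists_diagonals huP d hd
  -- `v` is the updated array, expressed through the diagonals instead of the τ-functions
  set v : ℕ → ℕ → ℝ := fun j m => u j m * D (m - j) j / D (m - j + 1) (j - 1) with hv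
  have hT : ∀ i < n - 1, bidiag n (D i) * Tmat n u (i + 1) =
      Tmat n v (i + 1) * bidiag n (D (i + 1)) := by
    intro i hi
    rw [hDstep i hi, Tmat_eq_lprod]
    congr 1
    apply lprod_congr
    intro j hj
    simp only [hv]
    rw [show i + 1 + j - (j + 1) = i by omega, show j + 1 - 1 = j by omega]
  have hprod : ∀ k ≤ n - 1,
      bidiag n d * ((List.range k).map (fun i => Tmat n u (i + 1))).prod =
        ((List.range k).map (fun i => Tmat n v (i + 1))).prod * bidiag n (D k) := by
    intro k
    induction k with
    | zero => intro _; simp [hD0]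
    | succ k ih =>
      intro hk
      simp only [List.range_succ, List.map_append, List.prod_append, List.map_cons,
        List.map_nil, List.prod_cons, List.prod_nil, mul_one]
      rw [← Matrix.mul_assoc, ih (by omega), Matrix.mul_assoc, hT k (by omega),
        Matrix.mul_assoc]
  have htau : ∀ k ≤ n - 1, ∀ j ≤ n,
      tauFun n u (bidiag n d) k j = ∏ q ∈ Finset.range j, D k q := by
    intro k hk j hj
    rw [tauFun, hprod k hk, leadMinor_lowUni_mul (isLowUni_prod_Tmat n v 1 k) _ _ hj]
  have hform : ∀ j m, 1 ≤ j → j ≤ m → m ≤ n - 1 →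
      uplusFormula n u (bidiag n d) j m = v j m := by
    intro j m h1 h2 h3
    rw [uplusFormula, if_pos ⟨h1, h2, h3⟩, htau _ (by omega) _ (by omega),
      htau _ (by omega) _ (by omega), htau _ (by omega) _ (by omega),
      htau _ (by omega) _ (by omega)]
    obtain ⟨j, rfl⟩ : ∃ i, j = i + 1 := ⟨j - 1, by omega⟩
    have hp : ∀ i ≤ n - 1, ∀ s, ∏ q ∈ Finset.range s, D i q ≠ 0 := fun i hi s =>
      Finset.prod_ne_zero_iff.2 fun q _ => (hDpos i hi q).ne'
    have e1 := hp (m - (j + 1)) (by omega) (j + 1)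
    have e2 := hp (m - (j + 1) + 1) (by omega) j
    have e3 := (hDpos (m - (j + 1) + 1) (by omega) j).ne'
    simp only [hv, Nat.add_sub_cancel]
    rw [Finset.prod_range_succ _ (j + 1),
      Finset.prod_range_succ (fun q => D (m - (j + 1) + 1) q) j]
    field_simp
  have hvpos : ∀ j m, 1 ≤ j → j ≤ m → m ≤ n - 1 → 0 < v j m := fun j m h1 h2 h3 =>
    div_pos (mul_pos (huP j m h1 h2 h3) (hDpos _ (by omega) _)) (hDpos _ (by omega) _)
  have hL : Lmat n (uplusFormula n u (bidiag n d)) = Lmat n v := by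
    unfold Lmat
    congr 1
    refine List.map_congr_left fun i _ => ?_
    rw [Tmat_eq_lprod, Tmat_eq_lprod]
    exact lprod_congr fun j hj => hform _ _ (by omega) (by omega) (by omega)
  have hX' : bidiag n d * Lmat n u = Lmat n v * bidiag n (D (n - 1)) := hprod (n - 1) le_rfl
  have hreg := isUpperTriReg_bidiag (n := n) (hDpos (n - 1) le_rfl)
  have hlow : ∀ w, IsLowUni (Lmat n w) := fun w => isLowUni_prod_Tmat n w 1 (n - 1)
  refine ⟨?_, ?_, ⟨_, hreg, by rw [hL, hX']⟩, ?_⟩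
  · intro k _ hk
    rw [hX', leadMinor_lowUni_mul (hlow v) _ _ hk]
    exact Finset.prod_pos fun q _ => hDpos _ le_rfl q
  · intro j m h1 h2 h3
    rw [hform j m h1 h2 h3]
    exact hvpos j m h1 h2 h3
  · rintro u' hT' hP' ⟨Rp', hRp', hfac'⟩
    refine Lmat_inj hn hP' hT' (fun i j hij => if_neg hij) ?_
    rw [hL]
    exact lu_unique (hlow _) (hlow _) hRp' hreg (hfac'.symm.trans hX')
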